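/- ∫₀¹ x·log Γ(x)·log(sin(πx)) dx = −(1/4)·log 2·log(2π/A⁴) − π²/48 + C·ζ(3)/(2π²) + ζ′(3)/(2π²) + (1/(2π²))·∑_{n=2}^∞ (H_n·log n)/n², where A = e^{1/12 − ζ′(−1)} is the Glaisher–Kinkelin constant, C = log(2π) + γ, and H_n is the n-th harmonic number. -/

import Mathlib

open Real

section

open MeasureTheory Set intervalIntegral Filter Topology

lemma HasSum.congr_of_eq {f g : ℕ → ℝ} {a b : ℝ} (h : HasSum f a) (hfg : ∀ n, g n = f n)
    (hab : b = a) : HasSum g b := by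
  rw [hab, funext hfg]
  exact h

lemma fourierCoeffOn_zero_one_ofReal {f : ℝ → ℝ}
    (hf : IntegrableOn f (Ioc 0 1)) (n : ℤ) :
    fourierCoeffOn (zero_lt_one' ℝ) (fun x => (f x : ℂ)) n =
      ((∫ x in (0:ℝ)..1, f x * cos (2 * π * n * x) : ℝ) : ℂ) -
        ((∫ x in (0:ℝ)..1, f x * sin (2 * π * n * x) : ℝ) : ℂ) * Complex.I := by
  have hfi : IntervalIntegrable f volume 0 1 :=
    (intervalIntegrable_iff_integrableOn_Ioc_of_le zero_le_one).2 hf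
  have hc : IntervalIntegrable (fun x => f x * cos (2 * π * n * x)) volume 0 1 :=
    hfi.mul_continuousOn (by fun_prop)
  have hs : IntervalIntegrable (fun x => f x * sin (2 * π * n * x)) volume 0 1 :=
    hfi.mul_continuousOn (by fun_prop)
  have hc' : IntervalIntegrable (fun x => ((f x * cos (2 * π * n * x) : ℝ) : ℂ)) volume 0 1 :=
    ⟨Integrable.ofReal hc.1, Integrable.ofReal hc.2⟩
  have hs' : IntervalIntegrable (fun x => ((f x * sin (2 * π * n * x) : ℝ) : ℂ)) volume 0 1 :=
    ⟨Integrable.ofReal hs.1, Integrable.ofReal hs.2⟩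
  rw [fourierCoeffOn_eq_integral, ← intervalIntegral.integral_ofReal,
    ← intervalIntegral.integral_ofReal, ← intervalIntegral.integral_mul_const,
    ← intervalIntegral.integral_sub hc' (hs'.mul_const _)]
  simp only [sub_zero, one_div, inv_one, one_smul]
  refine intervalIntegral.integral_congr fun x _ => ?_
  simp only [fourier_coe_apply]
  have : 2 * (π:ℂ) * Complex.I * ((-n : ℤ) : ℂ) * x / ((1 - 0 : ℝ) : ℂ) =
      ((-(2 * π * n * x) : ℝ) : ℂ) * Complex.I := by
    push_cast; ring
  rw [this, Complex.exp_mul_I, ← Complex.ofReal_cos, ← Complex.ofReal_sin, cos_neg, sin_neg]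
  simp only [smul_eq_mul]
  push_cast
  ring

/-- Parseval's identity for real functions on the unit interval, in trigonometric form. -/
lemma hasSum_sq_integral_cos_sin {f : ℝ → ℝ} (hf : MemLp f 2 (volume.restrict (Ioc 0 1))) :
    HasSum (fun n : ℕ => 2 * ((∫ x in (0:ℝ)..1, f x * cos (2 * π * (n + 1) * x)) ^ 2 +
        (∫ x in (0:ℝ)..1, f x * sin (2 * π * (n + 1) * x)) ^ 2))
      ((∫ x in (0:ℝ)..1, f x ^ 2) - (∫ x in (0:ℝ)..1, f x) ^ 2) := by
  have hi : IntegrableOn f (Ioc 0 1) := hf.integrable one_le_two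
  have h := hasSum_sq_fourierCoeffOn (zero_lt_one' ℝ) (f := fun x => (f x : ℂ)) hf.ofReal
  simp only [fourierCoeffOn_zero_one_ofReal hi, Complex.sq_norm, Complex.normSq_apply,
    Complex.sub_re, Complex.sub_im, Complex.ofReal_re, Complex.ofReal_im, Complex.re_ofReal_mul,
    Complex.im_ofReal_mul, Complex.I_re, Complex.I_im] at h
  have h2 := (hasSum_nat_add_iff' 1).2 h.nat_add_neg
  simp only [Finset.range_one, Finset.sum_singleton] at h2
  refine h2.congr_of_eq (fun n => ?_) ?_
  · push_cast
    simp only [mul_neg, neg_mul, cos_neg, sin_neg, intervalIntegral.integral_neg]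
    ring
  · simp [← sq]

/-- Polarised Parseval identity on the unit interval. -/
lemma hasSum_integral_cos_sin_mul {f g : ℝ → ℝ} (hf : MemLp f 2 (volume.restrict (Ioc 0 1)))
    (hg : MemLp g 2 (volume.restrict (Ioc 0 1))) :
    HasSum (fun n : ℕ => 2 *
        ((∫ x in (0:ℝ)..1, f x * cos (2 * π * (n + 1) * x)) *
            (∫ x in (0:ℝ)..1, g x * cos (2 * π * (n + 1) * x)) +
          (∫ x in (0:ℝ)..1, f x * sin (2 * π * (n + 1) * x)) *
            (∫ x in (0:ℝ)..1, g x * sin (2 * π * (n + 1) * x))))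
      ((∫ x in (0:ℝ)..1, f x * g x) - (∫ x in (0:ℝ)..1, f x) * ∫ x in (0:ℝ)..1, g x) := by
  have hfi : IntervalIntegrable f volume 0 1 :=
    (intervalIntegrable_iff_integrableOn_Ioc_of_le zero_le_one).2 (hf.integrable one_le_two)
  have hgi : IntervalIntegrable g volume 0 1 :=
    (intervalIntegrable_iff_integrableOn_Ioc_of_le zero_le_one).2 (hg.integrable one_le_two)
  have h := ((hasSum_sq_integral_cos_sin (hf.add hg)).sub
    (hasSum_sq_integral_cos_sin (hf.sub hg))).mul_left (1 / 4)
  have hadd (u : ℝ → ℝ) (hu : Continuous u) :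
      (∫ x in (0:ℝ)..1, (f + g) x * u x) =
        (∫ x in (0:ℝ)..1, f x * u x) + ∫ x in (0:ℝ)..1, g x * u x := by
    rw [← intervalIntegral.integral_add (hfi.mul_continuousOn hu.continuousOn)
      (hgi.mul_continuousOn hu.continuousOn)]
    simp only [Pi.add_apply, add_mul]
  have hsub (u : ℝ → ℝ) (hu : Continuous u) :
      (∫ x in (0:ℝ)..1, (f - g) x * u x) =
        (∫ x in (0:ℝ)..1, f x * u x) - ∫ x in (0:ℝ)..1, g x * u x := by
    rw [← intervalIntegral.integral_sub (hfi.mul_continuousOn hu.continuousOn)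
      (hgi.mul_continuousOn hu.continuousOn)]
    simp only [Pi.sub_apply, sub_mul]
  have hadd1 := hadd (fun _ => 1) continuous_const
  have hsub1 := hsub (fun _ => 1) continuous_const
  simp only [mul_one] at hadd1 hsub1
  have hsq : (∫ x in (0:ℝ)..1, (f + g) x ^ 2) - ∫ x in (0:ℝ)..1, (f - g) x ^ 2 =
      4 * ∫ x in (0:ℝ)..1, f x * g x := by
    have ha : IntervalIntegrable (fun x => (f + g) x ^ 2) volume 0 1 :=
      (intervalIntegrable_iff_integrableOn_Ioc_of_le zero_le_one).2 (hf.add hg).integrable_sq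
    have hb : IntervalIntegrable (fun x => (f - g) x ^ 2) volume 0 1 :=
      (intervalIntegrable_iff_integrableOn_Ioc_of_le zero_le_one).2 (hf.sub hg).integrable_sq
    rw [← intervalIntegral.integral_sub ha hb, ← intervalIntegral.integral_const_mul]
    refine intervalIntegral.integral_congr fun x _ => ?_
    simp only [Pi.add_apply, Pi.sub_apply]
    ring
  refine h.congr_of_eq (fun n => ?_) ?_
  · rw [hadd _ (by fun_prop), hadd _ (by fun_prop), hsub _ (by fun_prop), hsub _ (by fun_prop)]
    ring
  · rw [hadd1, hsub1]
    linear_combination (-1 / 4) * hsq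

lemma integral_zero_one_eq_zero_of_antisymm {f : ℝ → ℝ} (h : ∀ x, f (1 - x) = -f x) :
    ∫ x in (0:ℝ)..1, f x = 0 := by
  have h1 := intervalIntegral.integral_comp_sub_left (a := 0) (b := 1) f 1
  simp only [h, intervalIntegral.integral_neg, sub_self, sub_zero] at h1
  linarith

lemma cos_two_pi_nat_mul_one_sub (n : ℕ) (x : ℝ) :
    cos (2 * π * n * (1 - x)) = cos (2 * π * n * x) := by
  rw [show 2 * π * n * (1 - x) = n * (2 * π) - 2 * π * n * x by ring, cos_nat_mul_two_pi_sub]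

lemma sin_two_pi_nat_mul_one_sub (n : ℕ) (x : ℝ) :
    sin (2 * π * n * (1 - x)) = -sin (2 * π * n * x) := by
  rw [show 2 * π * n * (1 - x) = n * (2 * π) - 2 * π * n * x by ring, sin_nat_mul_two_pi_sub]

lemma sin_pi_mul_one_sub (x : ℝ) : sin (π * (1 - x)) = sin (π * x) := by
  rw [mul_sub, mul_one, sin_pi_sub]

lemma sin_two_pi_nat (n : ℕ) : sin (2 * π * n) = 0 := by
  rw [show 2 * π * n = (2 * n : ℕ) * π by push_cast; ring, sin_nat_mul_pi]

lemma cos_two_pi_nat (n : ℕ) : cos (2 * π * n) = 1 := by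
  rw [mul_comm, cos_nat_mul_two_pi]

lemma integral_cos_two_pi_nat {n : ℕ} (hn : n ≠ 0) :
    ∫ x in (0:ℝ)..1, cos (2 * π * n * x) = 0 := by
  have hn' : (2 * π * n : ℝ) ≠ 0 := by positivity
  rw [intervalIntegral.integral_comp_mul_left (fun x => cos x) hn']
  simp [sin_two_pi_nat]

lemma integral_sin_two_pi_nat (n : ℕ) : ∫ x in (0:ℝ)..1, sin (2 * π * n * x) = 0 :=
  integral_zero_one_eq_zero_of_antisymm (sin_two_pi_nat_mul_one_sub n)

lemma integral_sub_half_mul_sin {n : ℕ} (hn : n ≠ 0) :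
    ∫ x in (0:ℝ)..1, (x - 1 / 2) * sin (2 * π * n * x) = -1 / (2 * π * n) := by
  have hn' : (2 * π * n : ℝ) ≠ 0 := by positivity
  have hd (x : ℝ) : HasDerivAt (fun x => -(x - 1 / 2) * cos (2 * π * n * x) / (2 * π * n) +
      sin (2 * π * n * x) / (2 * π * n) ^ 2) ((x - 1 / 2) * sin (2 * π * n * x)) x := by
    have hl : HasDerivAt (fun x : ℝ => 2 * π * n * x) (2 * π * n) x := by
      simpa using (hasDerivAt_id x).const_mul (2 * π * n)
    refine (((((hasDerivAt_id x).sub_const (1 / 2)).neg.mul hl.cos).div_const (2 * π * n)).add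
      (hl.sin.div_const ((2 * π * n) ^ 2))).congr_deriv ?_
    simp only [Pi.neg_apply, id]
    field_simp
    ring
  rw [integral_eq_sub_of_hasDerivAt (fun x _ => hd x)
    (Continuous.intervalIntegrable (by fun_prop) _ _)]
  simp only [mul_one, mul_zero, sin_two_pi_nat, cos_two_pi_nat, cos_zero, sin_zero]
  field_simp
  ring

lemma integral_sub_half_sq_mul_cos {n : ℕ} (hn : n ≠ 0) :
    ∫ x in (0:ℝ)..1, (x - 1 / 2) ^ 2 * cos (2 * π * n * x) = 2 / (2 * π * n) ^ 2 := by
  have hn' : (2 * π * n : ℝ) ≠ 0 := by positivity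
  have hd (x : ℝ) : HasDerivAt (fun x => (x - 1 / 2) ^ 2 * sin (2 * π * n * x) / (2 * π * n))
      ((x - 1 / 2) ^ 2 * cos (2 * π * n * x) +
        2 / (2 * π * n) * ((x - 1 / 2) * sin (2 * π * n * x))) x := by
    have hl : HasDerivAt (fun x : ℝ => 2 * π * n * x) (2 * π * n) x := by
      simpa using (hasDerivAt_id x).const_mul (2 * π * n)
    refine (((((hasDerivAt_id x).sub_const (1 / 2)).pow 2).mul hl.sin).div_const
      (2 * π * n)).congr_deriv ?_
    simp only [Pi.pow_apply, id, Nat.cast_ofNat]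
    field_simp
    ring
  have h := integral_eq_sub_of_hasDerivAt (a := 0) (b := 1) (fun x _ => hd x)
    (Continuous.intervalIntegrable (by fun_prop) _ _)
  rw [intervalIntegral.integral_add (Continuous.intervalIntegrable (by fun_prop) _ _)
    (Continuous.intervalIntegrable (by fun_prop) _ _), intervalIntegral.integral_const_mul,
    integral_sub_half_mul_sin hn] at h
  simp only [mul_one, mul_zero, sin_two_pi_nat, sin_zero] at h
  linear_combination h

lemma continuous_sin_mul_log_sin : Continuous fun x : ℝ => sin (π * x) * log (sin (π * x)) :=
  continuous_mul_log.comp (by fun_prop : Continuous fun x : ℝ => sin (π * x))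

lemma intervalIntegrable_log_sin_pi_mul :
    IntervalIntegrable (fun x => log (sin (π * x))) volume 0 1 := by
  have h : IntervalIntegrable (log ∘ sin) volume (π * 0) (π * 1) := intervalIntegrable_log_sin
  simpa using h.comp_mul_left (c := π)

lemma integral_log_sin_pi_mul : ∫ x in (0:ℝ)..1, log (sin (π * x)) = -log 2 := by
  rw [intervalIntegral.integral_comp_mul_left (fun x => log (sin x)) pi_ne_zero, mul_zero, mul_one,
    integral_log_sin_zero_pi, smul_eq_mul]
  field_simp

lemma sin_pi_mul_pos {x : ℝ} (hx : x ∈ Ioo (0:ℝ) 1) : 0 < sin (π * x) :=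
  sin_pos_of_pos_of_lt_pi (mul_pos pi_pos hx.1) (by nlinarith [hx.2, pi_pos])

lemma hasDerivAt_log_sin_pi_mul {x : ℝ} (hx : x ∈ Ioo (0:ℝ) 1) :
    HasDerivAt (fun x => log (sin (π * x))) (π * cos (π * x) / sin (π * x)) x := by
  have hl : HasDerivAt (fun x : ℝ => π * x) π x := by
    simpa using (hasDerivAt_id x).const_mul π
  have := hl.sin.log (sin_pi_mul_pos hx).ne'
  rwa [mul_comm (cos _)] at this

/-- Recursion for the cosine coefficients of `log (sin (π x))`, by integration by parts. -/
lemma integral_log_sin_mul_cos_succ (n : ℕ) :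
    2 * π * (n + 1 : ℕ) * (∫ x in (0:ℝ)..1, log (sin (π * x)) * cos (2 * π * (n + 1 : ℕ) * x)) -
        2 * π * n * (∫ x in (0:ℝ)..1, log (sin (π * x)) * cos (2 * π * n * x)) +
      π * (∫ x in (0:ℝ)..1, cos (2 * π * n * x)) = 0 := by
  set F : ℝ → ℝ := fun x => (sin (2 * π * (n + 1 : ℕ) * x) - sin (2 * π * n * x)) *
    log (sin (π * x)) with hF
  have hsub (x : ℝ) : sin (2 * π * (n + 1 : ℕ) * x) - sin (2 * π * n * x) =
      2 * cos ((2 * n + 1) * π * x) * sin (π * x) := by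
    rw [show 2 * π * (n + 1 : ℕ) * x = (2 * n + 1) * π * x + π * x by push_cast; ring,
      show 2 * π * n * x = (2 * n + 1) * π * x - π * x by ring, sin_add, sin_sub]
    ring
  have hadd (x : ℝ) : cos (2 * π * (n + 1 : ℕ) * x) + cos (2 * π * n * x) =
      2 * cos ((2 * n + 1) * π * x) * cos (π * x) := by
    rw [show 2 * π * (n + 1 : ℕ) * x = (2 * n + 1) * π * x + π * x by push_cast; ring,
      show 2 * π * n * x = (2 * n + 1) * π * x - π * x by ring, cos_add, cos_sub]
    ring
  have hcont : ContinuousOn F (Icc 0 1) := by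
    have : F = fun x => 2 * cos ((2 * n + 1) * π * x) * (sin (π * x) * log (sin (π * x))) := by
      funext x
      rw [hF]
      simp only [hsub]
      ring
    rw [this]
    exact (Continuous.mul (by fun_prop) continuous_sin_mul_log_sin).continuousOn
  have hderiv : ∀ x ∈ Ioo (0:ℝ) 1, HasDerivAt F
      (2 * π * (n + 1 : ℕ) * (log (sin (π * x)) * cos (2 * π * (n + 1 : ℕ) * x)) -
        2 * π * n * (log (sin (π * x)) * cos (2 * π * n * x)) +
        π * (cos (2 * π * (n + 1 : ℕ) * x) + cos (2 * π * n * x))) x := by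
    intro x hx
    have hs := (sin_pi_mul_pos hx).ne'
    have hl (k : ℕ) : HasDerivAt (fun x : ℝ => 2 * π * k * x) (2 * π * k) x := by
      simpa using (hasDerivAt_id x).const_mul (2 * π * k)
    have := ((hl (n + 1)).sin.sub (hl n).sin).mul (hasDerivAt_log_sin_pi_mul hx)
    refine this.congr_deriv ?_
    simp only [Pi.sub_apply]
    rw [hsub, hadd]
    field_simp
  have hi (k : ℕ) : IntervalIntegrable
      (fun x => log (sin (π * x)) * cos (2 * π * k * x)) volume 0 1 :=
    intervalIntegrable_log_sin_pi_mul.mul_continuousOn (by fun_prop)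
  have hc (k : ℕ) : IntervalIntegrable (fun x => cos (2 * π * k * x)) volume 0 1 :=
    Continuous.intervalIntegrable (by fun_prop) _ _
  have h := integral_eq_sub_of_hasDerivAt_of_le zero_le_one hcont hderiv
    ((((hi (n + 1)).const_mul _).sub ((hi n).const_mul _)).add
      (((hc (n + 1)).add (hc n)).const_mul _))
  rw [intervalIntegral.integral_add (((hi (n + 1)).const_mul _).sub ((hi n).const_mul _))
      (((hc (n + 1)).add (hc n)).const_mul _),
    intervalIntegral.integral_sub ((hi (n + 1)).const_mul _) ((hi n).const_mul _),
    intervalIntegral.integral_const_mul, intervalIntegral.integral_const_mul,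
    intervalIntegral.integral_const_mul, intervalIntegral.integral_add (hc (n + 1)) (hc n),
    integral_cos_two_pi_nat n.succ_ne_zero] at h
  simpa [hF] using h

lemma integral_log_sin_mul_cos {n : ℕ} (hn : n ≠ 0) :
    ∫ x in (0:ℝ)..1, log (sin (π * x)) * cos (2 * π * n * x) = -1 / (2 * n) := by
  have key (m : ℕ) : 2 * π * (m + 1 : ℕ) *
      (∫ x in (0:ℝ)..1, log (sin (π * x)) * cos (2 * π * (m + 1 : ℕ) * x)) = -π := by
    induction m with
    | zero =>
      have h := integral_log_sin_mul_cos_succ 0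
      simp only [Nat.cast_zero, mul_zero, zero_mul, cos_zero, intervalIntegral.integral_const] at h
      simp at h ⊢
      linarith
    | succ m ih =>
      have h := integral_log_sin_mul_cos_succ (m + 1)
      rw [integral_cos_two_pi_nat m.succ_ne_zero, ih] at h
      linarith
  obtain ⟨m, rfl⟩ := Nat.exists_eq_succ_of_ne_zero hn
  have h := key m
  have hm : ((m + 1 : ℕ) : ℝ) ≠ 0 := by positivity
  rw [Nat.succ_eq_add_one, eq_div_iff (by positivity)]
  refine mul_left_cancel₀ pi_ne_zero ?_
  linarith

lemma integral_log_sin_mul_sin (n : ℕ) :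
    ∫ x in (0:ℝ)..1, log (sin (π * x)) * sin (2 * π * n * x) = 0 := by
  refine integral_zero_one_eq_zero_of_antisymm fun x => ?_
  rw [sin_two_pi_nat_mul_one_sub, sin_pi_mul_one_sub]
  ring

lemma integral_sub_half_mul_log_sin_mul_cos (n : ℕ) :
    ∫ x in (0:ℝ)..1, (x - 1 / 2) * log (sin (π * x)) * cos (2 * π * n * x) = 0 := by
  refine integral_zero_one_eq_zero_of_antisymm fun x => ?_
  rw [cos_two_pi_nat_mul_one_sub, sin_pi_mul_one_sub]
  ring

lemma intervalIntegrable_sub_half_mul_log_sin :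
    IntervalIntegrable (fun x => (x - 1 / 2) * log (sin (π * x))) volume 0 1 :=
  intervalIntegrable_log_sin_pi_mul.continuousOn_mul (by fun_prop)

/-- Recursion for the sine coefficients of `(x - 1/2) log (sin (π x))`, by integration by parts. -/
lemma integral_sub_half_mul_log_sin_mul_sin_succ (n : ℕ) :
    (∫ x in (0:ℝ)..1, log (sin (π * x)) * cos (2 * π * n * x)) -
        (∫ x in (0:ℝ)..1, log (sin (π * x)) * cos (2 * π * (n + 1 : ℕ) * x)) +
      (2 * π * (n + 1 : ℕ) *
          (∫ x in (0:ℝ)..1, (x - 1 / 2) * log (sin (π * x)) * sin (2 * π * (n + 1 : ℕ) * x)) -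
        2 * π * n *
          (∫ x in (0:ℝ)..1, (x - 1 / 2) * log (sin (π * x)) * sin (2 * π * n * x))) +
      π * ((∫ x in (0:ℝ)..1, (x - 1 / 2) * sin (2 * π * (n + 1 : ℕ) * x)) +
        ∫ x in (0:ℝ)..1, (x - 1 / 2) * sin (2 * π * n * x)) = 0 := by
  set F : ℝ → ℝ := fun x => (x - 1 / 2) *
    (cos (2 * π * n * x) - cos (2 * π * (n + 1 : ℕ) * x)) * log (sin (π * x)) with hF
  have hsub (x : ℝ) : cos (2 * π * n * x) - cos (2 * π * (n + 1 : ℕ) * x) =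
      2 * sin ((2 * n + 1) * π * x) * sin (π * x) := by
    rw [show 2 * π * (n + 1 : ℕ) * x = (2 * n + 1) * π * x + π * x by push_cast; ring,
      show 2 * π * n * x = (2 * n + 1) * π * x - π * x by ring, cos_add, cos_sub]
    ring
  have hadd (x : ℝ) : sin (2 * π * (n + 1 : ℕ) * x) + sin (2 * π * n * x) =
      2 * sin ((2 * n + 1) * π * x) * cos (π * x) := by
    rw [show 2 * π * (n + 1 : ℕ) * x = (2 * n + 1) * π * x + π * x by push_cast; ring,
      show 2 * π * n * x = (2 * n + 1) * π * x - π * x by ring, sin_add, sin_sub]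
    ring
  have hcont : ContinuousOn F (Icc 0 1) := by
    have : F = fun x => (x - 1 / 2) * (2 * sin ((2 * n + 1) * π * x)) *
        (sin (π * x) * log (sin (π * x))) := by
      funext x
      rw [hF]
      simp only [hsub]
      ring
    rw [this]
    exact (Continuous.mul (by fun_prop) continuous_sin_mul_log_sin).continuousOn
  have hderiv : ∀ x ∈ Ioo (0:ℝ) 1, HasDerivAt F
      (log (sin (π * x)) * cos (2 * π * n * x) - log (sin (π * x)) * cos (2 * π * (n + 1 : ℕ) * x) +
        (2 * π * (n + 1 : ℕ) * ((x - 1 / 2) * log (sin (π * x)) * sin (2 * π * (n + 1 : ℕ) * x)) -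
          2 * π * n * ((x - 1 / 2) * log (sin (π * x)) * sin (2 * π * n * x))) +
        π * ((x - 1 / 2) * sin (2 * π * (n + 1 : ℕ) * x) + (x - 1 / 2) * sin (2 * π * n * x))) x := by
    intro x hx
    have hs := (sin_pi_mul_pos hx).ne'
    have hl (k : ℕ) : HasDerivAt (fun x : ℝ => 2 * π * k * x) (2 * π * k) x := by
      simpa using (hasDerivAt_id x).const_mul (2 * π * k)
    have := (((hasDerivAt_id x).sub_const (1 / 2)).mul ((hl n).cos.sub (hl (n + 1)).cos)).mul
      (hasDerivAt_log_sin_pi_mul hx)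
    refine this.congr_deriv ?_
    simp only [Pi.sub_apply, Pi.mul_apply, id]
    rw [← mul_add, hadd, ← mul_sub, hsub]
    field_simp
    ring
  have hi (k : ℕ) : IntervalIntegrable
      (fun x => log (sin (π * x)) * cos (2 * π * k * x)) volume 0 1 :=
    intervalIntegrable_log_sin_pi_mul.mul_continuousOn (by fun_prop)
  have hj (k : ℕ) : IntervalIntegrable
      (fun x => (x - 1 / 2) * log (sin (π * x)) * sin (2 * π * k * x)) volume 0 1 :=
    intervalIntegrable_sub_half_mul_log_sin.mul_continuousOn (by fun_prop)
  have hc (k : ℕ) : IntervalIntegrable (fun x => (x - 1 / 2) * sin (2 * π * k * x)) volume 0 1 :=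
    Continuous.intervalIntegrable (by fun_prop) _ _
  have h1 := (hi n).sub (hi (n + 1))
  have h2 := ((hj (n + 1)).const_mul (2 * π * (n + 1 : ℕ))).sub ((hj n).const_mul (2 * π * n))
  have h3 := ((hc (n + 1)).add (hc n)).const_mul π
  have h := integral_eq_sub_of_hasDerivAt_of_le zero_le_one hcont hderiv ((h1.add h2).add h3)
  rw [intervalIntegral.integral_add (h1.add h2) h3, intervalIntegral.integral_add h1 h2,
    intervalIntegral.integral_sub (hi n) (hi (n + 1)),
    intervalIntegral.integral_sub ((hj (n + 1)).const_mul _) ((hj n).const_mul _),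
    intervalIntegral.integral_const_mul, intervalIntegral.integral_const_mul,
    intervalIntegral.integral_const_mul, intervalIntegral.integral_add (hc (n + 1)) (hc n)] at h
  rw [h]
  simp [hF]

lemma integral_sub_half_mul_log_sin_mul_sin (n : ℕ) :
    ∫ x in (0:ℝ)..1, (x - 1 / 2) * log (sin (π * x)) * sin (2 * π * (n + 1 : ℕ) * x) =
      (log 2 + harmonic n) / (2 * π * (n + 1 : ℕ)) := by
  rw [eq_div_iff (by positivity), mul_comm]
  induction n with
  | zero =>
    have h := integral_sub_half_mul_log_sin_mul_sin_succ 0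
    rw [integral_log_sin_mul_cos (n := 0 + 1) one_ne_zero,
      integral_sub_half_mul_sin (n := 0 + 1) one_ne_zero] at h
    simp only [Nat.cast_zero, mul_zero, zero_mul, cos_zero, sin_zero, mul_one,
      integral_log_sin_pi_mul, intervalIntegral.integral_zero, harmonic_zero, zero_add,
      Nat.cast_one, Rat.cast_zero, add_zero] at h ⊢
    have : π * (-1 / (2 * π)) = -1 / 2 := by field_simp
    linarith
  | succ m ih =>
    have h := integral_sub_half_mul_log_sin_mul_sin_succ (m + 1)
    rw [integral_log_sin_mul_cos m.succ_ne_zero, integral_log_sin_mul_cos (m + 1).succ_ne_zero,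
      integral_sub_half_mul_sin m.succ_ne_zero, integral_sub_half_mul_sin (m + 1).succ_ne_zero,
      ih] at h
    rw [harmonic_succ]
    have e (k : ℕ) (hk : (k : ℝ) ≠ 0) : π * (-1 / (2 * π * k)) = -1 / (2 * k) := by
      field_simp
    have e1 := e (m + 1) (by positivity)
    have e2 := e (m + 1 + 1) (by positivity)
    have e3 : ((m + 1 : ℕ) : ℝ)⁻¹ = 2 * (1 / (2 * (m + 1 : ℕ))) := by field_simp
    push_cast at *
    rw [e3]
    linear_combination h - e1 - e2

/-- The Riemann–Lebesgue lemma for cosine coefficients on an interval. -/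
lemma tendsto_integral_mul_cos_nat {f : ℝ → ℝ} {a b : ℝ} (hab : a ≤ b)
    (hf : IntervalIntegrable f volume a b) {c : ℝ} (hc : 0 < c) :
    Tendsto (fun n : ℕ => ∫ x in a..b, f x * cos (c * n * x)) atTop (𝓝 0) := by
  have h := Real.tendsto_integral_exp_smul_cocompact
    ((Ioc a b).indicator fun x => (f x : ℂ))
  have hw : Tendsto (fun n : ℕ => c / (2 * π) * n) atTop (cocompact ℝ) :=
    (tendsto_natCast_atTop_atTop.const_mul_atTop (by positivity)).mono_right atTop_le_cocompact
  have h2 := (Complex.continuous_re.tendsto _).comp (h.comp hw)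
  rw [Complex.zero_re] at h2
  refine h2.congr fun n => ?_
  have hfi : IntegrableOn (fun x => (f x : ℂ)) (Ioc a b) := Integrable.ofReal hf.1
  have hint : Integrable (fun v => (Real.fourierChar (-(v * (c / (2 * π) * n)))) •
      (Ioc a b).indicator (fun x => (f x : ℂ)) v) := by
    have := (Real.fourierIntegral_convergent_iff (V := ℝ) (μ := volume)
      (f := (Ioc a b).indicator fun x => (f x : ℂ)) (c / (2 * π) * n)).2
      ((integrable_indicator_iff measurableSet_Ioc).2 hfi)
    simpa [mul_comm] using this
  simp only [Function.comp_apply]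
  rw [← RCLike.re_eq_complex_re, ← integral_re hint, intervalIntegral.integral_of_le hab,
    ← MeasureTheory.integral_indicator measurableSet_Ioc]
  congr 1
  funext x
  by_cases hx : x ∈ Ioc a b
  · rw [indicator_of_mem hx, indicator_of_mem hx, Circle.smul_def, Real.fourierChar_apply,
      show (((2 * π * -(x * (c / (2 * π) * n)) : ℝ) : ℂ)) = ((-(c * n * x) : ℝ) : ℂ) by
        congr 1; field_simp,
      Complex.exp_mul_I, ← Complex.ofReal_cos, ← Complex.ofReal_sin, cos_neg, sin_neg]
    generalize cos (c * n * x) = C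
    generalize sin (c * n * x) = S
    simp
    ring
  · rw [indicator_of_notMem hx, indicator_of_notMem hx]
    simp

lemma sinc_pi_mul_pos {x : ℝ} (hx : x ∈ Ico (0:ℝ) 1) : 0 < sinc (π * x) := by
  rcases hx.1.eq_or_lt with rfl | h
  · simp
  · rw [sinc_of_ne_zero (by positivity)]
    exact div_pos (sin_pi_mul_pos ⟨h, hx.2⟩) (by positivity)

lemma hasDerivAt_log_sinc {x : ℝ} (hx : x ∈ Ioo (0:ℝ) 1) :
    HasDerivAt (fun x => log (sinc (π * x))) (π * cos (π * x) / sin (π * x) - 1 / x) x := by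
  have h := ((hasDerivAt_log_sin_pi_mul hx).sub (hasDerivAt_log hx.1.ne')).sub_const (log π)
  rw [← one_div] at h
  refine h.congr_of_eventuallyEq ?_
  filter_upwards [isOpen_Ioo.mem_nhds hx] with y hy
  rw [sinc_of_ne_zero (mul_pos pi_pos hy.1).ne', log_div (sin_pi_mul_pos hy).ne'
    (mul_pos pi_pos hy.1).ne', log_mul pi_ne_zero hy.1.ne']
  simp only [Pi.sub_apply]
  ring

lemma continuousOn_log_sinc : ContinuousOn (fun x => log (sinc (π * x))) (Icc 0 (1 / 2)) := by
  refine ContinuousOn.log (continuous_sinc.comp (by fun_prop)).continuousOn fun x hx => ?_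
  exact (sinc_pi_mul_pos ⟨hx.1, hx.2.trans_lt (by norm_num)⟩).ne'

lemma pi_mul_cot_le_inv {x : ℝ} (hx : x ∈ Ioo (0:ℝ) (1 / 2)) :
    π * cos (π * x) / sin (π * x) - 1 / x ≤ 0 := by
  have h0 : 0 < π * x := mul_pos pi_pos hx.1
  have h1 : π * x < π / 2 := by nlinarith [hx.2, pi_pos]
  have hc := cos_pos_of_mem_Ioo ⟨by linarith, h1⟩
  have hs := sin_pos_of_pos_of_lt_pi h0 (by linarith)
  have ht := lt_tan h0 h1
  rw [tan_eq_sin_div_cos, lt_div_iff₀ hc] at ht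
  rw [sub_nonpos, div_le_div_iff₀ hs hx.1]
  linarith

lemma intervalIntegrable_cot_sub_inv :
    IntervalIntegrable (fun x => π * cos (π * x) / sin (π * x) - 1 / x) volume 0 (1 / 2) := by
  have h : IntervalIntegrable (fun x => -(π * cos (π * x) / sin (π * x) - 1 / x)) volume
      0 (1 / 2) := by
    rw [intervalIntegrable_iff_integrableOn_Ioc_of_le (by norm_num)]
    refine integrableOn_deriv_of_nonneg continuousOn_log_sinc.neg (fun x hx => ?_) fun x hx => ?_
    · exact (hasDerivAt_log_sinc ⟨hx.1, hx.2.trans (by norm_num)⟩).neg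
    · linarith [pi_mul_cot_le_inv hx]
  have h2 := h.neg
  simp only [Pi.neg_def, neg_neg] at h2
  exact h2

lemma integral_cot_sub_inv :
    ∫ x in (0:ℝ)..1 / 2, (π * cos (π * x) / sin (π * x) - 1 / x) = log 2 - log π := by
  rw [integral_eq_sub_of_hasDerivAt_of_le (by norm_num) continuousOn_log_sinc
    (fun x hx => hasDerivAt_log_sinc ⟨hx.1, hx.2.trans (by norm_num)⟩)
    intervalIntegrable_cot_sub_inv, sinc_of_ne_zero (by positivity), ← div_eq_mul_one_div,
    sin_pi_div_two, mul_zero, sinc_zero, log_one, sub_zero, one_div_div, log_div two_ne_zero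
    pi_ne_zero]

lemma one_sub_cos_div_eq (y : ℝ) :
    (1 - cos (2 * π * y)) / y = 2 * π * (sin (π * y) * sinc (π * y)) := by
  rcases eq_or_ne y 0 with rfl | hy
  · simp
  · rw [sinc_of_ne_zero (by positivity), show 2 * π * y = 2 * (π * y) by ring, cos_two_mul,
      cos_sq']
    field_simp
    ring

lemma continuous_one_sub_cos_div : Continuous fun y : ℝ => (1 - cos (2 * π * y)) / y := by
  simp only [one_sub_cos_div_eq]
  exact continuous_const.mul (Continuous.mul (by fun_prop) (continuous_sinc.comp (by fun_prop)))

lemma integral_sin_two_pi_half (m : ℕ) :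
    ∫ x in (0:ℝ)..1 / 2, 2 * π * m * sin (2 * π * m * x) = 1 - (-1) ^ m := by
  have hd (x : ℝ) : HasDerivAt (fun x => -cos (2 * π * m * x))
      (2 * π * m * sin (2 * π * m * x)) x := by
    have hl : HasDerivAt (fun x : ℝ => 2 * π * m * x) (2 * π * m) x := by
      simpa using (hasDerivAt_id x).const_mul (2 * π * m)
    exact hl.cos.neg.congr_deriv (by ring)
  rw [integral_eq_sub_of_hasDerivAt (fun x _ => hd x)
    (Continuous.intervalIntegrable (by fun_prop) _ _),
    show 2 * π * m * (1 / 2) = m * π by ring, cos_nat_mul_pi, mul_zero, cos_zero]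
  ring

lemma integral_sin_four_pi_half (K : ℕ) : ∫ x in (0:ℝ)..1 / 2, sin (4 * π * K * x) = 0 := by
  rcases eq_or_ne K 0 with rfl | hK
  · simp
  · have h := integral_sin_two_pi_half (2 * K)
    rw [intervalIntegral.integral_const_mul, pow_mul, neg_one_sq, one_pow, sub_self,
      mul_eq_zero_iff_left (by positivity)] at h
    refine (intervalIntegral.integral_congr (g := fun x => sin (2 * π * (2 * K : ℕ) * x))
      fun x _ => ?_).trans h
    congr 1
    push_cast
    ring

lemma integral_cot_mul_one_sub_cos (K : ℕ) :
    (∫ x in (0:ℝ)..1 / 2, (π * cos (π * x) / sin (π * x) - 1 / x) * (1 - cos (4 * π * K * x))) +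
      ∫ x in (0:ℝ)..1 / 2, (1 - cos (4 * π * K * x)) / x =
    2 * harmonic (2 * K) - harmonic K := by
  have hi (K : ℕ) : IntervalIntegrable (fun x => (π * cos (π * x) / sin (π * x) - 1 / x) *
      (1 - cos (4 * π * K * x))) volume 0 (1 / 2) :=
    intervalIntegrable_cot_sub_inv.mul_continuousOn (by fun_prop)
  have hj (K : ℕ) : IntervalIntegrable (fun x => (1 - cos (4 * π * K * x)) / x) volume
      0 (1 / 2) := by
    refine Continuous.intervalIntegrable ?_ _ _
    refine ((continuous_one_sub_cos_div.comp (continuous_const_mul (2 * K : ℝ))).mul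
      (continuous_const (y := (2 * K : ℝ)))).congr fun x => ?_
    simp only [Pi.mul_apply, Function.comp_apply]
    rw [show 2 * π * (2 * K * x) = 4 * π * K * x by ring]
    rcases eq_or_ne (K : ℝ) 0 with h | h
    · simp [h]
    · rcases eq_or_ne x 0 with rfl | hx
      · simp
      · field_simp
  induction K with
  | zero => simp
  | succ K ih =>
    have hdiff : ((∫ x in (0:ℝ)..1 / 2, (π * cos (π * x) / sin (π * x) - 1 / x) *
          (1 - cos (4 * π * (K + 1 : ℕ) * x))) +
        ∫ x in (0:ℝ)..1 / 2, (1 - cos (4 * π * (K + 1 : ℕ) * x)) / x) -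
        ((∫ x in (0:ℝ)..1 / 2, (π * cos (π * x) / sin (π * x) - 1 / x) *
          (1 - cos (4 * π * K * x))) +
        ∫ x in (0:ℝ)..1 / 2, (1 - cos (4 * π * K * x)) / x) =
        ∫ x in (0:ℝ)..1 / 2, (2 * π * sin (2 * π * (2 * K + 1 : ℕ) * x) +
          π * (sin (4 * π * (K + 1 : ℕ) * x) + sin (4 * π * K * x))) := by
      rw [← intervalIntegral.integral_add (hi _) (hj _), ← intervalIntegral.integral_add (hi _) (hj _),
        ← intervalIntegral.integral_sub ((hi _).add (hj _)) ((hi _).add (hj _))]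
      refine intervalIntegral.integral_congr_ae (Eventually.of_forall fun x hx => ?_)
      rw [uIoc_of_le (by norm_num)] at hx
      have hs := (sin_pi_mul_pos ⟨hx.1, hx.2.trans_lt (by norm_num)⟩).ne'
      have hx0 := hx.1.ne'
      rw [show 4 * π * (K + 1 : ℕ) * x = 2 * π * (2 * K + 1 : ℕ) * x + 2 * (π * x) by
          push_cast; ring,
        show 4 * π * K * x = 2 * π * (2 * K + 1 : ℕ) * x - 2 * (π * x) by push_cast; ring,
        cos_add, cos_sub, sin_add, sin_sub, sin_two_mul, cos_two_mul]
      generalize sin (2 * π * (2 * K + 1 : ℕ) * x) = S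
      generalize cos (2 * π * (2 * K + 1 : ℕ) * x) = C
      field_simp
      ring
    have hc (k : ℕ) : IntervalIntegrable (fun x => sin (4 * π * k * x)) volume 0 (1 / 2) :=
      Continuous.intervalIntegrable (by fun_prop) _ _
    have hodd := integral_sin_two_pi_half (2 * K + 1)
    rw [intervalIntegral.integral_const_mul, pow_succ, pow_mul, neg_one_sq, one_pow] at hodd
    rw [intervalIntegral.integral_add (Continuous.intervalIntegrable (by fun_prop) _ _)
      (((hc _).add (hc _)).const_mul _), intervalIntegral.integral_const_mul,
      intervalIntegral.integral_const_mul, intervalIntegral.integral_add (hc _) (hc _),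
      integral_sin_four_pi_half, integral_sin_four_pi_half, ih] at hdiff
    rw [show 2 * (K + 1) = 2 * K + 1 + 1 by ring, harmonic_succ, harmonic_succ, harmonic_succ]
    have hval : 2 * π * ∫ x in (0:ℝ)..1 / 2, sin (2 * π * (2 * K + 1 : ℕ) * x) =
        2 / (2 * K + 1 : ℕ) := by
      rw [eq_div_iff (by positivity)]
      linarith
    rw [hval] at hdiff
    rw [sub_eq_iff_eq_add.1 hdiff]
    push_cast
    field_simp
    ring

/-- The entire cosine integral `∫₀ᵀ (1 - cos t)/t dt - log T` tends to Euler's constant; here along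
the multiples `T = 2πN`. -/
lemma tendsto_integral_one_sub_cos_div_sub_log :
    Tendsto (fun N : ℕ => (∫ y in (0:ℝ)..N, (1 - cos (2 * π * y)) / y) - log N) atTop
      (𝓝 (log (2 * π) + eulerMascheroniConstant)) := by
  have hscale {N : ℕ} (hN : N ≠ 0) : ∫ x in (0:ℝ)..1 / 2, (1 - cos (4 * π * N * x)) / x =
      ∫ y in (0:ℝ)..N, (1 - cos (2 * π * y)) / y := by
    have hN' : (2 * N : ℝ) ≠ 0 := by positivity
    have h := intervalIntegral.integral_comp_mul_left (a := 0) (b := 1 / 2)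
      (fun y => (1 - cos (2 * π * y)) / y) hN'
    rw [mul_zero, show (2 * N : ℝ) * (1 / 2) = N by ring, smul_eq_mul, eq_inv_mul_iff_mul_eq₀ hN',
      ← intervalIntegral.integral_const_mul] at h
    rw [← h]
    refine intervalIntegral.integral_congr fun x _ => ?_
    rw [show 2 * π * (2 * N * x) = 4 * π * N * x by ring]
    rcases eq_or_ne x 0 with rfl | hx
    · simp
    · field_simp
  have hrl := tendsto_integral_mul_cos_nat (by norm_num) intervalIntegrable_cot_sub_inv
    (c := 4 * π) (by positivity)
  have hH := tendsto_harmonic_sub_log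
  have hH2 := hH.comp (tendsto_id.const_mul_atTop' (two_pos (α := ℕ)))
  have hlim := (((hH2.const_mul 2).sub hH).add_const (2 * log 2 - (log 2 - log π))).add hrl
  refine (hlim.congr' ?_).trans (le_of_eq ?_)
  · filter_upwards [eventually_ne_atTop 0] with N hN
    have h := integral_cot_mul_one_sub_cos N
    have hc : IntervalIntegrable (fun x => (π * cos (π * x) / sin (π * x) - 1 / x) *
        cos (4 * π * N * x)) volume 0 (1 / 2) :=
      intervalIntegrable_cot_sub_inv.mul_continuousOn (by fun_prop)
    rw [hscale hN] at h
    simp only [mul_sub (_ - _), mul_one] at h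
    rw [intervalIntegral.integral_sub intervalIntegrable_cot_sub_inv hc, integral_cot_sub_inv] at h
    have hlog : log ((2 * N : ℕ) : ℝ) = log 2 + log N := by
      rw [Nat.cast_mul, Nat.cast_ofNat, log_mul two_ne_zero (Nat.cast_ne_zero.2 hN)]
    simp only [Function.comp_apply, id, hlog]
    linarith
  · rw [log_mul two_ne_zero pi_ne_zero]
    congr 1
    ring

lemma one_sub_cos_nat_div (m : ℕ) (x : ℝ) :
    (1 - cos (2 * π * m * x)) / x = m * ((1 - cos (2 * π * (m * x))) / (m * x)) := by
  rw [show 2 * π * m * x = 2 * π * (m * x) by ring]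
  rcases eq_or_ne (m : ℝ) 0 with h | h
  · simp [h]
  · rcases eq_or_ne x 0 with rfl | hx
    · simp
    · field_simp

lemma integral_log_mul_sin_nat {m : ℕ} (hm : m ≠ 0) (N : ℕ) :
    ∫ x in (0:ℝ)..N, log x * sin (2 * π * m * x) =
      -(1 / (2 * π * m)) * ∫ y in (0:ℝ)..(m * N : ℕ), (1 - cos (2 * π * y)) / y := by
  have hcont : Continuous fun x : ℝ => (1 - cos (2 * π * m * x)) / x := by
    simp only [one_sub_cos_nat_div]
    exact continuous_const.mul (continuous_one_sub_cos_div.comp (continuous_const_mul (m : ℝ)))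
  have hF : Continuous fun x : ℝ => log x * (1 - cos (2 * π * m * x)) := by
    refine (continuous_mul_log.mul hcont).congr fun x => ?_
    simp only [Pi.mul_apply]
    rcases eq_or_ne x 0 with rfl | hx
    · simp
    · field_simp
  have hderiv : ∀ x ∈ Ioo (0:ℝ) N, HasDerivAt (fun x : ℝ => log x * (1 - cos (2 * π * m * x)))
      ((1 - cos (2 * π * m * x)) / x + 2 * π * m * (log x * sin (2 * π * m * x))) x := by
    intro x hx
    have hl : HasDerivAt (fun x : ℝ => 2 * π * m * x) (2 * π * m) x := by
      simpa using (hasDerivAt_id x).const_mul (2 * π * m)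
    refine ((hasDerivAt_log hx.1.ne').mul (hl.cos.const_sub 1)).congr_deriv ?_
    ring
  have hi : IntervalIntegrable (fun x => log x * sin (2 * π * m * x)) volume 0 N :=
    intervalIntegrable_log'.mul_continuousOn (by fun_prop)
  have hci := hcont.intervalIntegrable (μ := volume) 0 N
  have h := integral_eq_sub_of_hasDerivAt_of_le N.cast_nonneg hF.continuousOn hderiv
    (hci.add (hi.const_mul _))
  rw [intervalIntegral.integral_add hci (hi.const_mul _), intervalIntegral.integral_const_mul,
    show 2 * π * m * N = (m * N : ℕ) * (2 * π) by push_cast; ring, cos_nat_mul_two_pi, log_zero,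
    zero_mul, sub_self, mul_zero, sub_zero] at h
  simp only [one_sub_cos_nat_div] at h
  rw [intervalIntegral.integral_const_mul,
    intervalIntegral.mul_integral_comp_mul_left (f := fun y => (1 - cos (2 * π * y)) / y),
    mul_zero] at h
  have hm' : (m : ℝ) ≠ 0 := Nat.cast_ne_zero.2 hm
  push_cast
  field_simp
  linarith

lemma sum_integral_log_add_mul_sin (m N : ℕ) :
    ∑ k ∈ Finset.range N, ∫ x in (0:ℝ)..1, log (x + k) * sin (2 * π * m * x) =
      ∫ x in (0:ℝ)..N, log x * sin (2 * π * m * x) := by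
  have h := intervalIntegral.sum_integral_adjacent_intervals (a := fun k : ℕ => (k : ℝ))
    (f := fun x => log x * sin (2 * π * m * x)) (μ := volume) (n := N) fun k _ =>
      intervalIntegrable_log'.mul_continuousOn (by fun_prop)
  rw [Nat.cast_zero] at h
  rw [← h]
  refine Finset.sum_congr rfl fun k _ => ?_
  have hk := intervalIntegral.integral_comp_add_right (a := 0) (b := 1)
    (fun x => log x * sin (2 * π * m * x)) (k : ℝ)
  rw [zero_add, add_comm 1 (k : ℝ)] at hk
  rw [Nat.cast_succ, ← hk]
  refine intervalIntegral.integral_congr fun x _ => ?_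
  rw [show 2 * π * m * (x + k) = 2 * π * m * x + (m * k : ℕ) * (2 * π) by push_cast; ring,
    sin_add_nat_mul_two_pi]

lemma intervalIntegrable_log_add (k : ℕ) :
    IntervalIntegrable (fun x => log (x + k)) volume 0 1 := by
  have h := (intervalIntegrable_log' (a := (k : ℝ)) (b := k + 1)).comp_add_right (k : ℝ)
  simpa using h

lemma integral_logGammaSeq_mul_sin {m : ℕ} (hm : m ≠ 0) (n : ℕ) :
    ∫ x in (0:ℝ)..1, BohrMollerup.logGammaSeq x n * sin (2 * π * m * x) =
      1 / (2 * π * m) *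
        ((∫ y in (0:ℝ)..(m * (n + 1) : ℕ), (1 - cos (2 * π * y)) / y) - log n) := by
  have hk (k : ℕ) : IntervalIntegrable (fun x => log (x + k) * sin (2 * π * m * x)) volume 0 1 :=
    (intervalIntegrable_log_add k).mul_continuousOn (by fun_prop)
  have hsum := integral_finsetSum (s := Finset.range (n + 1)) (μ := volume) (a := 0) (b := 1)
    (f := fun (k : ℕ) x => log (x + k) * sin (2 * π * m * x)) fun k _ => hk k
  rw [sum_integral_log_add_mul_sin, integral_log_mul_sin_nat hm] at hsum
  have hsin : IntervalIntegrable (fun x => sin (2 * π * m * x)) volume 0 1 :=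
    Continuous.intervalIntegrable (by fun_prop) _ _
  have hx : IntervalIntegrable (fun x => (x - 1 / 2) * sin (2 * π * m * x)) volume 0 1 :=
    Continuous.intervalIntegrable (by fun_prop) _ _
  have hsi : IntervalIntegrable (fun x => ∑ k ∈ Finset.range (n + 1),
      log (x + k) * sin (2 * π * m * x)) volume 0 1 := by
    have := IntervalIntegrable.sum (Finset.range (n + 1)) fun k _ => hk k
    simpa only [Finset.sum_fn] using this
  have hexp (x : ℝ) : BohrMollerup.logGammaSeq x n * sin (2 * π * m * x) =
      log n * ((x - 1 / 2) * sin (2 * π * m * x)) +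
        (log n / 2 + log (n.factorial)) * sin (2 * π * m * x) -
        ∑ k ∈ Finset.range (n + 1), log (x + k) * sin (2 * π * m * x) := by
    rw [BohrMollerup.logGammaSeq, ← Finset.sum_mul]
    ring
  simp only [hexp]
  rw [intervalIntegral.integral_sub ((hx.const_mul _).add (hsin.const_mul _)) hsi, hsum,
    intervalIntegral.integral_add (hx.const_mul _) (hsin.const_mul _),
    intervalIntegral.integral_const_mul, intervalIntegral.integral_const_mul,
    integral_sub_half_mul_sin hm, integral_sin_two_pi_nat]
  ring

lemma continuousOn_log_Gamma_one_add :
    ContinuousOn (fun x => log (Gamma (x + 1))) (Icc 0 1) := by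
  intro x hx
  have hpos : 0 < x + 1 := by linarith [hx.1]
  refine (ContinuousAt.log (f := fun x => Gamma (x + 1)) ?_
    (Gamma_pos_of_pos hpos).ne').continuousWithinAt
  refine ContinuousAt.comp (x := x) (g := Gamma) (f := fun x : ℝ => x + 1) ?_ (by fun_prop)
  refine (differentiableAt_Gamma fun m => ?_).continuousAt
  have : (0:ℝ) ≤ m := m.cast_nonneg
  linarith [hx.1]

lemma log_Gamma_add_one {y : ℝ} (hy : 0 < y) : log (Gamma (y + 1)) = log (Gamma y) + log y := by
  rw [Gamma_add_one hy.ne', log_mul hy.ne' (Gamma_pos_of_pos hy).ne', add_comm]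

lemma memLp_log_Ioc : MemLp log 2 (volume.restrict (Ioc (0:ℝ) 1)) := by
  rw [memLp_two_iff_integrable_sq measurable_log.aestronglyMeasurable]
  have hint : IntegrableOn (fun x : ℝ => 16 * x ^ (-(1 / 2) : ℝ)) (Ioc 0 1) :=
    ((intervalIntegrable_rpow' (a := 0) (b := 1) (by norm_num : (-1:ℝ) < -(1 / 2))).const_mul 16).1
  refine hint.mono' (measurable_log.pow_const 2).aestronglyMeasurable ?_
  refine (ae_restrict_mem measurableSet_Ioc).mono fun x hx => ?_
  have h := abs_log_mul_self_rpow_lt x (1 / 4) hx.1 hx.2 (by norm_num)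
  have hp : 0 < x ^ (1 / 4 : ℝ) := rpow_pos_of_pos hx.1 _
  have hsq : (log x * x ^ (1 / 4 : ℝ)) ^ 2 ≤ 16 := by
    rw [← sq_abs]
    nlinarith [abs_nonneg (log x * x ^ (1 / 4 : ℝ))]
  have hp2 : (x ^ (1 / 4 : ℝ)) ^ 2 = x ^ (1 / 2 : ℝ) := by
    rw [← rpow_natCast, ← rpow_mul hx.1.le]
    norm_num
  rw [norm_of_nonneg (sq_nonneg _), rpow_neg hx.1.le, ← hp2, ← div_eq_mul_inv,
    le_div_iff₀ (by positivity), ← mul_pow]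
  exact hsq

lemma memLp_two_of_continuousOn {f : ℝ → ℝ} (hf : ContinuousOn f (Icc 0 1)) :
    MemLp f 2 (volume.restrict (Ioc (0:ℝ) 1)) := by
  have hm : AEStronglyMeasurable f (volume.restrict (Ioc (0:ℝ) 1)) :=
    (hf.mono Ioc_subset_Icc_self).aestronglyMeasurable measurableSet_Ioc
  rw [memLp_two_iff_integrable_sq hm]
  exact ((hf.pow 2).integrableOn_compact isCompact_Icc).mono_set Ioc_subset_Icc_self

lemma memLp_log_Gamma : MemLp (fun x => log (Gamma x)) 2 (volume.restrict (Ioc (0:ℝ) 1)) := by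
  have h1 : MemLp (fun x => log (Gamma (x + 1))) 2 (volume.restrict (Ioc (0:ℝ) 1)) :=
    memLp_two_of_continuousOn continuousOn_log_Gamma_one_add
  refine (h1.sub memLp_log_Ioc).ae_eq ?_
  refine (ae_restrict_mem measurableSet_Ioc).mono fun x hx => ?_
  simp [log_Gamma_add_one hx.1]

lemma intervalIntegrable_of_memLp_two {f : ℝ → ℝ}
    (hf : MemLp f 2 (volume.restrict (Ioc (0:ℝ) 1))) : IntervalIntegrable f volume 0 1 := by
  rw [intervalIntegrable_iff_integrableOn_Ioc_of_le zero_le_one]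
  exact hf.integrable (by norm_num)

lemma abs_log_Gamma_sub_logGammaSeq_le {x : ℝ} (hx : x ∈ Ioc (0:ℝ) 1) {n : ℕ} (hn : n ≠ 0) :
    |log (Gamma x) - BohrMollerup.logGammaSeq x n| ≤ log (n + 1) - log n := by
  have h1 := BohrMollerup.le_logGammaSeq convexOn_log_Gamma log_Gamma_add_one hx.1 hx.2 n
  have h2 := BohrMollerup.ge_logGammaSeq convexOn_log_Gamma log_Gamma_add_one hx.1 hn
  simp only [Function.comp_apply, Gamma_one, log_one, zero_add] at h1 h2
  have hn' : (0:ℝ) < n := Nat.cast_pos.2 (Nat.pos_of_ne_zero hn)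
  have hl : log n ≤ log (n + 1) := log_le_log hn' (by linarith)
  rw [abs_of_nonneg (by linarith)]
  nlinarith [hx.2]

/-- Kummer's sine coefficients of `log Γ`. -/
lemma integral_log_Gamma_mul_sin {m : ℕ} (hm : m ≠ 0) :
    ∫ x in (0:ℝ)..1, log (Gamma x) * sin (2 * π * m * x) =
      (log (2 * π) + eulerMascheroniConstant + log m) / (2 * π * m) := by
  have hm' : (m : ℝ) ≠ 0 := Nat.cast_ne_zero.2 hm
  have hmul : Tendsto (fun n : ℕ => m * (n + 1)) atTop atTop :=
    (tendsto_add_atTop_nat 1).const_mul_atTop' (Nat.pos_of_ne_zero hm)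
  have hlim : Tendsto (fun n : ℕ => ∫ x in (0:ℝ)..1,
      BohrMollerup.logGammaSeq x n * sin (2 * π * m * x)) atTop
      (𝓝 ((log (2 * π) + eulerMascheroniConstant + log m) / (2 * π * m))) := by
    have h := (((tendsto_integral_one_sub_cos_div_sub_log.comp hmul).add_const (log m)).add
      tendsto_log_nat_add_one_sub_log).const_mul (1 / (2 * π * m))
    rw [add_zero, one_div_mul_eq_div] at h
    refine h.congr fun n => ?_
    rw [integral_logGammaSeq_mul_sin hm]
    simp only [Function.comp_apply]
    push_cast
    rw [log_mul hm' (by positivity)]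
    ring
  refine tendsto_nhds_unique ?_ hlim
  rw [tendsto_iff_norm_sub_tendsto_zero]
  refine squeeze_zero' (Eventually.of_forall fun n => norm_nonneg _) ?_
    tendsto_log_nat_add_one_sub_log
  filter_upwards [eventually_ne_atTop 0] with n hn
  have hL : IntervalIntegrable (fun x => log (Gamma x) * sin (2 * π * m * x)) volume 0 1 :=
    (intervalIntegrable_of_memLp_two memLp_log_Gamma).mul_continuousOn (by fun_prop)
  have hS : IntervalIntegrable (fun x => BohrMollerup.logGammaSeq x n * sin (2 * π * m * x))
      volume 0 1 := by
    refine IntervalIntegrable.mul_continuousOn ?_ (by fun_prop)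
    have h1 : IntervalIntegrable (fun x => x * log n + log n.factorial) volume 0 1 :=
      Continuous.intervalIntegrable (by fun_prop) _ _
    have h2 := IntervalIntegrable.sum (Finset.range (n + 1)) fun k _ => intervalIntegrable_log_add k
    refine (h1.sub h2).congr fun x _ => ?_
    simp [BohrMollerup.logGammaSeq]
  rw [norm_sub_rev, ← intervalIntegral.integral_sub hL hS]
  refine (intervalIntegral.norm_integral_le_of_norm_le_const (C := log (n + 1) - log n)
    fun x hx => ?_).trans (by simp)
  rw [uIoc_of_le zero_le_one] at hx
  rw [← sub_mul, norm_mul, norm_eq_abs, norm_eq_abs]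
  exact (mul_le_of_le_one_right (abs_nonneg _) (abs_sin_le_one _)).trans
    (abs_log_Gamma_sub_logGammaSeq_le hx hn)

lemma log_Gamma_reflection {x : ℝ} (hx : x ∈ Ioo (0:ℝ) 1) :
    log (Gamma x) + log (Gamma (1 - x)) = log π - log (sin (π * x)) := by
  rw [← log_mul (Gamma_pos_of_pos hx.1).ne' (Gamma_pos_of_pos (by linarith [hx.2])).ne',
    Gamma_mul_Gamma_one_sub, log_div pi_ne_zero (sin_pi_mul_pos hx).ne']

lemma ae_Ioo_zero_one : ∀ᵐ x ∂(volume.restrict (Ioc (0:ℝ) 1)), x ∈ Ioo (0:ℝ) 1 := by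
  rw [← restrict_Ioo_eq_restrict_Ioc]
  exact ae_restrict_mem measurableSet_Ioo

lemma memLp_comp_one_sub {f : ℝ → ℝ} (hf : MemLp f 2 (volume.restrict (Ioc (0:ℝ) 1))) :
    MemLp (fun x => f (1 - x)) 2 (volume.restrict (Ioc (0:ℝ) 1)) := by
  rw [← restrict_Ioo_eq_restrict_Ioc] at hf ⊢
  have hmp := (Measure.measurePreserving_sub_left (volume : Measure ℝ) 1).restrict_preimage
    (s := Ioo (0:ℝ) 1) measurableSet_Ioo
  rw [show (fun x : ℝ => 1 - x) ⁻¹' Ioo 0 1 = Ioo 0 1 by simp] at hmp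
  exact hf.comp_measurePreserving hmp

lemma memLp_log_sin : MemLp (fun x => log (sin (π * x))) 2 (volume.restrict (Ioc (0:ℝ) 1)) := by
  have h := ((memLp_const (log π)).sub memLp_log_Gamma).sub (memLp_comp_one_sub memLp_log_Gamma)
  refine h.ae_eq (ae_Ioo_zero_one.mono fun x hx => ?_)
  simp only [Pi.sub_apply]
  linarith [log_Gamma_reflection hx]

lemma integral_zero_one_log_Gamma_mul_of_symm {g : ℝ → ℝ} (hg : Continuous g)
    (hsymm : ∀ x, g (1 - x) = g x) :
    ∫ x in (0:ℝ)..1, log (Gamma x) * g x =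
      (log π * (∫ x in (0:ℝ)..1, g x) - ∫ x in (0:ℝ)..1, log (sin (π * x)) * g x) / 2 := by
  have hL := (intervalIntegrable_of_memLp_two memLp_log_Gamma).mul_continuousOn hg.continuousOn
  have hL' := (intervalIntegrable_of_memLp_two
    (memLp_comp_one_sub memLp_log_Gamma)).mul_continuousOn hg.continuousOn
  have hs := (intervalIntegrable_of_memLp_two memLp_log_sin).mul_continuousOn hg.continuousOn
  have hrefl : ∫ x in (0:ℝ)..1, log (Gamma (1 - x)) * g x =
      ∫ x in (0:ℝ)..1, log (Gamma x) * g x := by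
    have h := intervalIntegral.integral_comp_sub_left (a := 0) (b := 1)
      (fun x => log (Gamma x) * g x) 1
    simpa only [hsymm, sub_self, sub_zero] using h
  have hadd : (∫ x in (0:ℝ)..1, log (Gamma x) * g x) +
      ∫ x in (0:ℝ)..1, log (Gamma (1 - x)) * g x =
      log π * (∫ x in (0:ℝ)..1, g x) - ∫ x in (0:ℝ)..1, log (sin (π * x)) * g x := by
    rw [← intervalIntegral.integral_add hL hL', ← intervalIntegral.integral_const_mul,
      ← intervalIntegral.integral_sub ((hg.intervalIntegrable _ _).const_mul _) hs,
      intervalIntegral.integral_of_le zero_le_one, intervalIntegral.integral_of_le zero_le_one]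
    refine integral_congr_ae (ae_Ioo_zero_one.mono fun x hx => ?_)
    simp only
    rw [← add_mul, log_Gamma_reflection hx, sub_mul]
  linarith

lemma integral_log_Gamma_mul_cos {m : ℕ} (hm : m ≠ 0) :
    ∫ x in (0:ℝ)..1, log (Gamma x) * cos (2 * π * m * x) = 1 / (4 * m) := by
  rw [integral_zero_one_log_Gamma_mul_of_symm (by fun_prop) (cos_two_pi_nat_mul_one_sub m),
    integral_cos_two_pi_nat hm, integral_log_sin_mul_cos hm]
  field_simp
  norm_num

lemma integral_log_Gamma : ∫ x in (0:ℝ)..1, log (Gamma x) = log (2 * π) / 2 := by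
  have h := integral_zero_one_log_Gamma_mul_of_symm (g := fun _ => 1) continuous_const fun _ => rfl
  simp only [mul_one, integral_log_sin_pi_mul, intervalIntegral.integral_const] at h
  rw [h, log_mul two_ne_zero pi_ne_zero, sub_zero, one_smul, mul_one]
  ring

lemma hasSum_one_div_succ_sq : HasSum (fun n : ℕ => 1 / ((n : ℝ) + 1) ^ 2) (π ^ 2 / 6) := by
  have h := (hasSum_nat_add_iff' 1).2 hasSum_zeta_two
  exact h.congr_of_eq (fun n => by push_cast; rfl) (by simp)

lemma hasSum_one_div_succ_cube :
    HasSum (fun n : ℕ => 1 / ((n : ℝ) + 1) ^ 3) (riemannZeta 3).re := by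
  have hs : Summable fun n : ℕ => 1 / ((n : ℝ) + 1) ^ 3 := by
    have := (summable_nat_add_iff 1).2 (Real.summable_one_div_nat_pow.2 (by norm_num : 1 < 3))
    exact_mod_cast this
  have h := zeta_eq_tsum_one_div_nat_add_one_cpow (s := 3) (by norm_num)
  have h2 : riemannZeta 3 = ((∑' n : ℕ, 1 / ((n : ℝ) + 1) ^ 3 : ℝ) : ℂ) := by
    rw [h, Complex.ofReal_tsum]
    refine tsum_congr fun n => ?_
    push_cast
    norm_cast
  rw [h2, Complex.ofReal_re]
  exact hs.hasSum

lemma hasSum_log_succ_div_pow {k : ℕ} (hk : 1 < k) :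
    HasSum (fun n : ℕ => log ((n : ℝ) + 1) / ((n : ℝ) + 1) ^ k) (-(deriv riemannZeta k).re) := by
  have hk' : (1:ℝ) < (k : ℂ).re := by simpa using hk
  have habs : LSeries.abscissaOfAbsConv 1 < ((k : ℂ).re : EReal) := by
    rw [LSeries.abscissaOfAbsConv_one]
    exact_mod_cast hk'
  have hd : deriv riemannZeta k = deriv (LSeries 1) k := by
    refine Filter.EventuallyEq.deriv_eq ?_
    filter_upwards [(isOpen_lt continuous_const Complex.continuous_re).mem_nhds hk'] with s hs
    exact (LSeries_one_eq_riemannZeta hs).symm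
  rw [hd, LSeries_deriv habs, Complex.neg_re, neg_neg]
  have h := (LSeriesSummable_logMul_of_lt_re habs).hasSum
  have h2 := Complex.hasSum_re ((hasSum_nat_add_iff' 1).2 h)
  refine h2.congr_of_eq (fun n => ?_) ?_
  · rw [LSeries.term_of_ne_zero n.succ_ne_zero, LSeries.logMul, Complex.cpow_natCast,
      Pi.one_apply, mul_one, Complex.natCast_log.symm]
    rw [← Complex.ofReal_re (log ((n : ℝ) + 1) / ((n : ℝ) + 1) ^ k)]
    push_cast
    rfl
  · simp [LSeries]

lemma deriv_riemannZeta_neg_one_re :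
    (deriv riemannZeta (-1)).re = 1 / (2 * π ^ 2) *
      ((1 - (log (2 * π) + eulerMascheroniConstant)) * (π ^ 2 / 6) + (deriv riemannZeta 2).re) := by
  have hz (s : ℂ) (hs : s ≠ 1) : HasDerivAt riemannZeta (deriv riemannZeta s) s :=
    (differentiableAt_riemannZeta hs).hasDerivAt
  have hG : HasDerivAt Complex.Gamma (1 - eulerMascheroniConstant : ℂ) 2 := by
    have h := Complex.hasDerivAt_Gamma_nat 1
    norm_num at h
    exact h.congr_deriv (by ring)
  have hlhs : HasDerivAt (fun s : ℂ => riemannZeta (1 - s)) (-deriv riemannZeta (-1)) 2 := by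
    have h1 : HasDerivAt (fun s : ℂ => 1 - s) (-1) 2 := (hasDerivAt_id (2:ℂ)).const_sub 1
    have h2 := HasDerivAt.comp (h₂ := riemannZeta) (2:ℂ)
      (hz (1 - 2) (by norm_num)) h1
    exact h2.congr_deriv (by norm_num)
  have hpow : HasDerivAt (fun s : ℂ => (2 * π : ℂ) ^ (-s))
      ((2 * π : ℂ) ^ (-2 : ℂ) * Complex.log (2 * π) * -1) 2 :=
    (hasDerivAt_id (2:ℂ)).neg.const_cpow (Or.inl (by exact_mod_cast two_pi_pos.ne'))
  have hcos : HasDerivAt (fun s : ℂ => Complex.cos (π * s / 2))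
      (-Complex.sin (π * 2 / 2) * (π * 1 / 2)) 2 :=
    (((hasDerivAt_id (2:ℂ)).const_mul (π : ℂ)).div_const 2).ccos
  have hrhs := (((hpow.const_mul 2).mul hG).mul hcos).mul (hz 2 (by norm_num))
  have heq : (fun s : ℂ => riemannZeta (1 - s)) =ᶠ[𝓝 2] fun s : ℂ =>
      2 * (2 * π : ℂ) ^ (-s) * Complex.Gamma s * Complex.cos (π * s / 2) * riemannZeta s := by
    filter_upwards [(isOpen_lt continuous_const Complex.continuous_re).mem_nhds
      (show (1:ℝ) < (2:ℂ).re by norm_num)] with s hs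
    refine riemannZeta_one_sub (fun n h => ?_) fun h => ?_
    · rw [h] at hs
      have : (0:ℝ) ≤ n := n.cast_nonneg
      simp at hs
      linarith
    · rw [h] at hs
      simp at hs
  have h := hlhs.unique (hrhs.congr_of_eventuallyEq heq)
  have hlog : Complex.log (2 * π) = (log (2 * π) : ℝ) := by
    rw [Complex.ofReal_log two_pi_pos.le]
    push_cast
    rfl
  have hG2 : Complex.Gamma 2 = 1 := by simp
  have hp : (2 * π : ℂ) ^ (-2 : ℂ) = 1 / (4 * π ^ 2) := by
    rw [Complex.cpow_neg, show (2:ℂ) = (2:ℕ) by norm_num, Complex.cpow_natCast]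
    push_cast
    ring
  simp only [Pi.mul_apply] at h
  rw [mul_div_cancel_right₀ (π : ℂ) two_ne_zero, Complex.cos_pi, Complex.sin_pi, hG2, hlog, hp,
    riemannZeta_two] at h
  have hpi : (π : ℂ) ≠ 0 := Complex.ofReal_ne_zero.2 pi_ne_zero
  have h' : deriv riemannZeta (-1) =
      ((1 / (2 * π ^ 2) * ((1 - (log (2 * π) + eulerMascheroniConstant)) * (π ^ 2 / 6)) : ℝ) : ℂ) +
        ((1 / (2 * π ^ 2) : ℝ) : ℂ) * deriv riemannZeta 2 := by
    rw [← neg_inj, h]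
    push_cast
    field_simp
    ring
  rw [h', Complex.add_re, Complex.re_ofReal_mul, Complex.ofReal_re]
  ring

lemma integral_sub_half_mul_log_sin : ∫ x in (0:ℝ)..1, (x - 1 / 2) * log (sin (π * x)) = 0 := by
  simpa using integral_sub_half_mul_log_sin_mul_cos 0

lemma memLp_sub_half_mul_log_sin :
    MemLp (fun x => (x - 1 / 2) * log (sin (π * x))) 2 (volume.restrict (Ioc (0:ℝ) 1)) := by
  have hm : AEStronglyMeasurable (fun x : ℝ => (x - 1 / 2) * log (sin (π * x)))
      (volume.restrict (Ioc (0:ℝ) 1)) :=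
    (Measurable.mul (by fun_prop)
      (measurable_log.comp (by fun_prop))).aestronglyMeasurable
  refine memLp_log_sin.mono hm ?_
  refine (ae_restrict_mem measurableSet_Ioc).mono fun x hx => ?_
  rw [norm_mul]
  refine mul_le_of_le_one_left (norm_nonneg _) ?_
  rw [norm_eq_abs, abs_le]
  constructor <;> linarith [hx.1, hx.2]

/-- Euler's sum `∑ H_{n-1}/n² = ζ(3)`. -/
lemma hasSum_harmonic_div_succ_sq :
    HasSum (fun n : ℕ => (harmonic n : ℝ) / ((n : ℝ) + 1) ^ 2) (riemannZeta 3).re := by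
  have hg : MemLp (fun x : ℝ => x - 1 / 2) 2 (volume.restrict (Ioc (0:ℝ) 1)) :=
    memLp_two_of_continuousOn (by fun_prop)
  have hg2 : MemLp (fun x : ℝ => (x - 1 / 2) ^ 2) 2 (volume.restrict (Ioc (0:ℝ) 1)) :=
    memLp_two_of_continuousOn (by fun_prop)
  have h1 := hasSum_integral_cos_sin_mul memLp_sub_half_mul_log_sin hg
  have h2 := hasSum_integral_cos_sin_mul memLp_log_sin hg2
  have hI : ∫ x in (0:ℝ)..1, (x - 1 / 2) * log (sin (π * x)) * (x - 1 / 2) =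
      ∫ x in (0:ℝ)..1, log (sin (π * x)) * (x - 1 / 2) ^ 2 := by
    congr 1
    funext x
    ring
  have hsq : ∫ x in (0:ℝ)..1, (x - 1 / 2) ^ 2 = 1 / 12 := by
    rw [intervalIntegral.integral_comp_sub_right (fun x => x ^ 2), integral_pow]
    norm_num
  rw [integral_sub_half_mul_log_sin, zero_mul, sub_zero, hI] at h1
  rw [integral_log_sin_pi_mul, hsq] at h2
  have hcast (n : ℕ) : (n : ℝ) + 1 = (n + 1 : ℕ) := by push_cast; rfl
  have h2' := h2.unique ((hasSum_one_div_succ_cube.mul_left (-1 / (2 * π ^ 2))).congr_of_eq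
    (fun n => by
      rw [hcast, integral_log_sin_mul_cos n.succ_ne_zero, integral_log_sin_mul_sin,
        integral_sub_half_sq_mul_cos n.succ_ne_zero]
      field_simp
      ring) rfl)
  have h3 := (h1.mul_left (-(2 * π ^ 2))).sub (hasSum_one_div_succ_sq.mul_left (log 2))
  refine h3.congr_of_eq (fun n => ?_) ?_
  · rw [hcast, integral_sub_half_mul_log_sin_mul_sin, integral_sub_half_mul_log_sin_mul_cos,
      integral_sub_half_mul_sin n.succ_ne_zero]
    field_simp
    ring
  · rw [sub_eq_iff_eq_add.1 h2']
    field_simp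
    ring

lemma memLp_mul_log_sin :
    MemLp (fun x => x * log (sin (π * x))) 2 (volume.restrict (Ioc (0:ℝ) 1)) := by
  refine (memLp_sub_half_mul_log_sin.add (memLp_log_sin.const_mul (1 / 2))).ae_eq
    (Eventually.of_forall fun x => ?_)
  simp only [Pi.add_apply]
  ring

lemma integral_mul_log_sin_mul {g : ℝ → ℝ} (hg : Continuous g) :
    ∫ x in (0:ℝ)..1, x * log (sin (π * x)) * g x =
      (∫ x in (0:ℝ)..1, (x - 1 / 2) * log (sin (π * x)) * g x) +
        1 / 2 * ∫ x in (0:ℝ)..1, log (sin (π * x)) * g x := by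
  rw [← intervalIntegral.integral_const_mul, ← intervalIntegral.integral_add
    (intervalIntegrable_sub_half_mul_log_sin.mul_continuousOn hg.continuousOn)
    ((intervalIntegrable_log_sin_pi_mul.mul_continuousOn hg.continuousOn).const_mul _)]
  congr 1
  funext x
  ring

lemma integral_mul_log_sin : ∫ x in (0:ℝ)..1, x * log (sin (π * x)) = -log 2 / 2 := by
  have h := integral_mul_log_sin_mul (g := fun _ => 1) continuous_const
  simp only [mul_one, integral_sub_half_mul_log_sin, integral_log_sin_pi_mul] at h
  rw [h]
  ring

lemma hasSum_integral_log_Gamma_mul_log_sin :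
    HasSum (fun n : ℕ => -(1 / 8) * (1 / ((n : ℝ) + 1) ^ 2) + 1 / (2 * π ^ 2) *
        ((log (2 * π) + eulerMascheroniConstant + log ((n : ℝ) + 1)) * (log 2 + harmonic n) /
          ((n : ℝ) + 1) ^ 2))
      ((∫ x in (0:ℝ)..1, x * log (Gamma x) * log (sin (π * x))) + log (2 * π) * log 2 / 4) := by
  have h := hasSum_integral_cos_sin_mul memLp_log_Gamma memLp_mul_log_sin
  have hcast (n : ℕ) : (n : ℝ) + 1 = (n + 1 : ℕ) := by push_cast; rfl
  refine h.congr_of_eq (fun n => ?_) ?_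
  · rw [hcast, integral_log_Gamma_mul_cos n.succ_ne_zero,
      integral_log_Gamma_mul_sin n.succ_ne_zero, integral_mul_log_sin_mul (by fun_prop),
      integral_mul_log_sin_mul (by fun_prop), integral_sub_half_mul_log_sin_mul_sin,
      integral_sub_half_mul_log_sin_mul_cos, integral_log_sin_mul_cos n.succ_ne_zero,
      integral_log_sin_mul_sin]
    field_simp
    ring
  · rw [integral_log_Gamma, integral_mul_log_sin, sub_eq_add_neg]
    congr 1
    · congr 1
      funext x
      ring
    · ring

lemma hasSum_harmonic_mul_log_div_sq :
    HasSum (fun n : ℕ => (harmonic (n + 2) : ℝ) * log (n + 2) / ((n : ℝ) + 2) ^ 2)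
      (2 * π ^ 2 * ((∫ x in (0:ℝ)..1, x * log (Gamma x) * log (sin (π * x))) +
          log (2 * π) * log 2 / 4 + π ^ 2 / 48) -
        (log (2 * π) + eulerMascheroniConstant) * (log 2 * (π ^ 2 / 6) + (riemannZeta 3).re) +
        log 2 * (deriv riemannZeta 2).re - (deriv riemannZeta 3).re) := by
  have hl2 := hasSum_log_succ_div_pow (k := 2) (by norm_num)
  have hl3 := hasSum_log_succ_div_pow (k := 3) (by norm_num)
  have h := ((((hasSum_integral_log_Gamma_mul_log_sin.add
    (hasSum_one_div_succ_sq.mul_left (1 / 8))).mul_left (2 * π ^ 2)).sub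
    (((hasSum_one_div_succ_sq.mul_left (log 2)).add hasSum_harmonic_div_succ_sq).mul_left
      (log (2 * π) + eulerMascheroniConstant))).sub (hl2.mul_left (log 2))).add hl3
  have h2 : HasSum (fun n : ℕ => (harmonic (n + 1) : ℝ) * log (n + 1) / ((n : ℝ) + 1) ^ 2) _ :=
    h.congr_of_eq (fun n => by
      rw [harmonic_succ]
      push_cast
      field_simp
      ring) rfl
  refine ((hasSum_nat_add_iff' 1).2 h2).congr_of_eq (fun n => ?_) ?_
  · push_cast
    rw [add_assoc (n : ℝ) 1 1, one_add_one_eq_two]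
  · simp
    ring

end

/-- `∫₀¹ x·log Γ(x)·log(sin(πx)) dx
      = −(1/4)·log 2·log(2π/A⁴) − π²/48 + C·ζ(3)/(2π²) + ζ′(3)/(2π²)
        + (1/(2π²))·∑_{n=2}^∞ (H_n·log n)/n²`,
where `A = exp(1/12 − ζ′(−1))` is the Glaisher–Kinkelin constant,
`C = log(2π) + γ`, and `H_n` is the n-th harmonic number. -/
theorem integral_x_log_Gamma_mul_log_sin :
    ∫ x in (0:ℝ)..1, x * Real.log (Real.Gamma x) * Real.log (Real.sin (π * x)) =
      -(1 / 4) * Real.log 2 *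
          Real.log (2 * π / (Real.exp (1 / 12 - (deriv riemannZeta (-1)).re)) ^ 4)
        - π ^ 2 / 48
        + (Real.log (2 * π) + Real.eulerMascheroniConstant) * (riemannZeta 3).re / (2 * π ^ 2)
        + (deriv riemannZeta 3).re / (2 * π ^ 2)
        + (1 / (2 * π ^ 2)) *
            ∑' n : ℕ, (harmonic (n + 2) : ℝ) * Real.log (n + 2) / ((n : ℝ) + 2) ^ 2 := by
  rw [hasSum_harmonic_mul_log_div_sq.tsum_eq, log_div two_pi_pos.ne' (by positivity), log_pow,
    log_exp, deriv_riemannZeta_neg_one_re]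
  generalize (∫ x in (0:ℝ)..1, x * log (Gamma x) * log (sin (π * x))) = I
  field_simp
  ring
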